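/- arXiv:2208.13540 — 5 statements merged into one kernel-verified Lean document; each statement's English description precedes it below -/
import Mathlib

section
/- For every affine map f : ℝⁿ → ℝ, the squared L² norm over an n-simplex has the exact representation ∫_T f(x)² dx = (|T| / ((n+1)(n+2))) · ( Σᵢ₌₀ⁿ f(vᵢ)² + (Σᵢ₌₀ⁿ f(vᵢ))² ). -/
open MeasureTheory

/-- The corner simplex of size `t`. -/
def cornerS (n : ℕ) (t : ℝ) : Set (Fin n → ℝ) := {x | (∀ i, 0 ≤ x i) ∧ ∑ i, x i ≤ t}

lemma cornerS_closed (n : ℕ) (t : ℝ) : IsClosed (cornerS n t) := by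
  have : cornerS n t = (⋂ i, {x | 0 ≤ x i}) ∩ {x | ∑ i, x i ≤ t} := by
    ext x; simp [cornerS]
  rw [this]
  refine (isClosed_iInter fun i => ?_).inter ?_
  · exact isClosed_le continuous_const (continuous_apply i)
  · exact isClosed_le (by fun_prop) continuous_const

lemma cornerS_compact (n : ℕ) (t : ℝ) : IsCompact (cornerS n t) := by
  refine (isCompact_Icc (a := (0 : Fin n → ℝ)) (b := fun _ => t)).of_isClosed_subset
    (cornerS_closed n t) ?_
  rintro x ⟨h0, h1⟩
  refine ⟨fun i => h0 i, fun i => le_trans ?_ h1⟩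
  exact Finset.single_le_sum (f := x) (fun j _ => h0 j) (Finset.mem_univ i)

lemma cornerS_convex (n : ℕ) (t : ℝ) : Convex ℝ (cornerS n t) := by
  rintro x ⟨hx0, hx1⟩ y ⟨hy0, hy1⟩ a b ha hb hab
  refine ⟨fun i => ?_, ?_⟩
  · have := hx0 i
    have := hy0 i
    simp only [Pi.add_apply, Pi.smul_apply, smul_eq_mul]
    positivity
  · simp only [Pi.add_apply, Pi.smul_apply, smul_eq_mul, Finset.sum_add_distrib,
      ← Finset.mul_sum]
    have h1 := mul_le_mul_of_nonneg_left hx1 ha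
    have h2 := mul_le_mul_of_nonneg_left hy1 hb
    have : a * t + b * t = t := by rw [← add_mul, hab, one_mul]
    linarith

lemma cons_mem_cornerS (n : ℕ) (t y : ℝ) (x : Fin n → ℝ) :
    (Fin.cons y x : Fin (n + 1) → ℝ) ∈ cornerS (n + 1) t ↔
      y ∈ Set.Icc 0 t ∧ x ∈ cornerS n (t - y) := by
  simp only [cornerS, Set.mem_ofPred_eq, Fin.forall_fin_succ, Fin.sum_univ_succ, Fin.cons_zero,
    Fin.cons_succ, Set.mem_Icc]
  constructor
  · rintro ⟨⟨h0, h1⟩, h2⟩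
    have := Finset.sum_nonneg (s := Finset.univ) fun i _ => h1 i
    exact ⟨⟨h0, by linarith⟩, h1, by linarith⟩
  · rintro ⟨⟨h0, h1⟩, h2, h3⟩
    exact ⟨⟨h0, h2⟩, by linarith⟩

lemma slice_cornerS (n : ℕ) (t : ℝ) (ht : 0 ≤ t) (g : (Fin (n + 1) → ℝ) → ℝ)
    (hg : Continuous g) :
    ∫ x in cornerS (n + 1) t, g x =
      ∫ y in (0 : ℝ)..t, ∫ x in cornerS n (t - y), g (Fin.cons y x) := by
  have hm := (cornerS_closed (n + 1) t).measurableSet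
  have hmp := (volume_preserving_piFinSuccAbove (fun _ : Fin (n + 1) => ℝ) 0).symm
  have hc : ∀ (y : ℝ) (x : Fin n → ℝ),
      (MeasurableEquiv.piFinSuccAbove (fun _ : Fin (n + 1) => ℝ) 0).symm (y, x)
        = (Fin.cons y x : Fin (n + 1) → ℝ) := by
    intro y x
    simp only [MeasurableEquiv.piFinSuccAbove_symm_apply, Fin.insertNthEquiv,
      Fin.insertNth_zero, Equiv.coe_fn_mk]
    rfl
  have hI : Integrable ((cornerS (n + 1) t).indicator g) :=
    (integrable_indicator_iff hm).2 (hg.continuousOn.integrableOn_compact (cornerS_compact _ t))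
  rw [← integral_indicator hm, ← hmp.integral_comp', Measure.volume_eq_prod, integral_prod]
  · rw [intervalIntegral.integral_of_le ht, ← integral_Icc_eq_integral_Ioc,
      ← integral_indicator measurableSet_Icc]
    congr 1
    ext y
    by_cases hy : y ∈ Set.Icc 0 t
    · rw [Set.indicator_of_mem hy, ← integral_indicator (cornerS_closed n _).measurableSet]
      congr 1
      ext x
      have := cons_mem_cornerS n t y x
      simp only [hy, true_and] at this
      rw [hc]
      by_cases hx : x ∈ cornerS n (t - y)
      · rw [Set.indicator_of_mem hx, Set.indicator_of_mem (this.2 hx)]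
      · rw [Set.indicator_of_notMem hx, Set.indicator_of_notMem (fun h => hx (this.1 h))]
    · rw [Set.indicator_of_notMem hy]
      refine integral_eq_zero_of_ae (Filter.Eventually.of_forall fun x => ?_)
      have := cons_mem_cornerS n t y x
      simp only [hy, false_and, iff_false] at this
      change (cornerS (n + 1) t).indicator g _ = 0
      rw [hc]
      exact Set.indicator_of_notMem this _
  · exact (hmp.integrable_comp_emb (MeasurableEquiv.measurableEmbedding _)).2 hI

lemma poly_integral (n : ℕ) (t A B C : ℝ) :
    ∫ y in (0 : ℝ)..t, ((t - y) ^ n * A + (t - y) ^ (n + 1) * B + (t - y) ^ (n + 2) * C) =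
      t ^ (n + 1) / (n + 1) * A + t ^ (n + 2) / (n + 2) * B + t ^ (n + 3) / (n + 3) * C := by
  rw [intervalIntegral.integral_comp_sub_left
    (fun s => s ^ n * A + s ^ (n + 1) * B + s ^ (n + 2) * C) t]
  rw [intervalIntegral.integral_add, intervalIntegral.integral_add]
  · simp only [intervalIntegral.integral_mul_const, integral_pow, sub_self, sub_zero]
    push_cast
    simp
    ring
  all_goals exact Continuous.intervalIntegrable (by fun_prop) _ _

lemma corner_integral (n : ℕ) : ∀ (t : ℝ) (_ : 0 ≤ t) (a : ℝ) (b : Fin n → ℝ),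
    ∫ x in cornerS n t, (a + ∑ i, x i * b i) ^ 2 =
      t ^ n / (n + 2).factorial * ((n + 1) * (n + 2) * a ^ 2 + 2 * (n + 2) * a * t * (∑ i, b i)
        + t ^ 2 * (∑ i, b i ^ 2 + (∑ i, b i) ^ 2)) := by
  induction n with
  | zero =>
    intro t ht a b
    have : cornerS 0 t = Set.univ := by ext x; simp [cornerS, ht]
    simp [this, integral_const, Measure.real, volume_pi]
  | succ n ih =>
    intro t ht a b
    rw [slice_cornerS n t ht _ (by fun_prop)]
    simp only [Fin.sum_univ_succ, Fin.cons_zero, Fin.cons_succ, ← add_assoc]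
    set B := ∑ i : Fin n, b i.succ
    set Q := ∑ i : Fin n, b i.succ ^ 2
    set c := b 0
    have h1 : ∀ y ∈ Set.uIcc 0 t, ∫ x in cornerS n (t - y), (a + y * c + ∑ i, x i * b i.succ) ^ 2
        = (t - y) ^ n * ((n + 1) * (n + 2) * (a + c * t) ^ 2 / (n + 2).factorial)
        + (t - y) ^ (n + 1) * ((2 * (n + 2) * (a + c * t) * B
            - 2 * (n + 1) * (n + 2) * (a + c * t) * c) / (n + 2).factorial)
        + (t - y) ^ (n + 2) * (((n + 1) * (n + 2) * c ^ 2 - 2 * (n + 2) * c * B + Q + B ^ 2)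
            / (n + 2).factorial) := by
      intro y hy
      rw [Set.uIcc_of_le ht] at hy
      rw [ih (t - y) (by linarith [hy.2])]
      ring
    rw [intervalIntegral.integral_congr h1, poly_integral]
    have hf : ((n + 1 + 2).factorial : ℝ) = (n + 3) * (n + 2).factorial := by
      rw [show n + 1 + 2 = (n + 2) + 1 by ring, Nat.factorial_succ]; push_cast; ring
    rw [hf]
    have h2 : ((n + 2).factorial : ℝ) ≠ 0 := by positivity
    have h3 : (n : ℝ) + 1 ≠ 0 := by positivity
    have h4 : (n : ℝ) + 2 ≠ 0 := by positivity
    have h5 : (n : ℝ) + 3 ≠ 0 := by positivity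
    push_cast
    field_simp
    ring

/-- For every affine map `f : ℝⁿ → ℝ`, the squared `L²` norm over an `n`-simplex
`T = conv{v₀, …, vₙ}` has the exact representation
`∫_T f(x)² dx = (|T| / ((n+1)(n+2))) · (Σᵢ f(vᵢ)² + (Σᵢ f(vᵢ))²)`. -/
theorem affine_sq_integral_simplex (n : ℕ) (hn : 1 ≤ n)
    (v : Fin (n + 1) → (Fin n → ℝ)) (hv : AffineIndependent ℝ v)
    (f : (Fin n → ℝ) →ᵃ[ℝ] ℝ) :
    (∫ x in convexHull ℝ (Set.range v), (f x) ^ 2)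
      = ((volume (convexHull ℝ (Set.range v))).toReal / (((n : ℝ) + 1) * ((n : ℝ) + 2)))
          * ((∑ i, (f (v i)) ^ 2) + (∑ i, f (v i)) ^ 2) := by
  set u : Fin n → (Fin n → ℝ) := fun i => v i.succ - v 0 with hu
  set L : (Fin n → ℝ) →ₗ[ℝ] (Fin n → ℝ) := Fintype.linearCombination ℝ u with hL
  have hLi : LinearIndependent ℝ u := by
    rw [affineIndependent_iff_linearIndependent_vsub ℝ v 0] at hv
    exact hv.comp (fun i : Fin n => (⟨i.succ, Fin.succ_ne_zero i⟩ : {x // x ≠ (0 : Fin (n + 1))}))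
      (fun i j h => by simpa using h)
  have hinj : Function.Injective L := by
    rw [hL]
    exact hLi.fintypeLinearCombination_injective
  set φ : (Fin n → ℝ) →ᵃ[ℝ] (Fin n → ℝ) := L.toAffineMap + AffineMap.const ℝ _ (v 0) with hφ
  have hφa : ∀ x, φ x = ∑ i, x i • u i + v 0 := fun x => by
    simp [hφ, hL, Fintype.linearCombination_apply]
  have hT : convexHull ℝ (Set.range v) = φ '' cornerS n 1 := by
    apply Set.Subset.antisymm
    · refine convexHull_min ?_ ((cornerS_convex n 1).affine_image φ)
      rintro _ ⟨i, rfl⟩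
      refine Fin.cases ?_ (fun i => ?_) i
      · exact ⟨0, ⟨by simp, by simp⟩, by simp [hφa]⟩
      · refine ⟨Pi.single i 1, ⟨fun j => ?_, by simp⟩, ?_⟩
        · by_cases h : j = i
          · subst h; simp
          · simp [h]
        · simp [hφa, Pi.single_apply, hu]
    · rintro _ ⟨x, ⟨h0, h1⟩, rfl⟩
      refine mem_convexHull_of_exists_fintype (Fin.cons (1 - ∑ i, x i) x) v ?_ ?_
        (fun i => ⟨i, rfl⟩) ?_
      · intro i
        refine Fin.cases ?_ (fun i => ?_) i
        · simpa using h1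
        · simpa using h0 i
      · simp [Fin.sum_univ_succ]
      · simp only [Fin.sum_univ_succ, Fin.cons_zero, Fin.cons_succ, hφa, hu, smul_sub,
          Finset.sum_sub_distrib, ← Finset.sum_smul, sub_smul, one_smul]
        abel
  have hder : ∀ x ∈ cornerS n 1, HasFDerivWithinAt φ (LinearMap.toContinuousLinearMap L)
      (cornerS n 1) x := fun x _ => by
    have := ((LinearMap.toContinuousLinearMap L).hasFDerivWithinAt (s := cornerS n 1)
      (x := x)).add_const (v 0)
    exact this
  have hφi : Set.InjOn φ (cornerS n 1) := fun x _ y _ h => hinj (by simpa [hφ] using h)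
  have key := fun g : (Fin n → ℝ) → ℝ => integral_image_eq_integral_abs_det_fderiv_smul volume
    (cornerS_closed n 1).measurableSet hder hφi g
  set D := |(LinearMap.toContinuousLinearMap L).det|
  have hvol : (volume (convexHull ℝ (Set.range v))).toReal = D * (1 / (n.factorial : ℝ)) := by
    have h1 := key (fun _ => 1)
    rw [← hT] at h1
    have h2 := corner_integral n 1 zero_le_one 1 0
    simp only [Pi.zero_apply, mul_zero, Finset.sum_const_zero, add_zero, one_pow] at h2
    simp only [smul_eq_mul] at h1
    rw [integral_const_mul, h2] at h1
    simp only [integral_const, Measure.real, Measure.restrict_apply_univ,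
      smul_eq_mul, mul_one] at h1
    rw [h1, Nat.factorial_succ, Nat.factorial_succ]
    have : (n.factorial : ℝ) ≠ 0 := by positivity
    have h3 : (n : ℝ) + 1 ≠ 0 := by positivity
    have h4 : (n : ℝ) + 2 ≠ 0 := by positivity
    push_cast
    have h5 : (n : ℝ) + 1 + 1 = n + 2 := by ring
    rw [h5]
    field_simp
    simp
    ring
  have hfφ : ∀ x, f (φ x) = f (v 0) + ∑ i, x i * (f (v i.succ) - f (v 0)) := by
    intro x
    have h1 : ∀ p q : Fin n → ℝ, f (p + q) = f.linear p + f q := fun p q => f.map_vadd q p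
    rw [hφa, h1, map_sum, add_comm]
    congr 1
    refine Finset.sum_congr rfl fun i _ => ?_
    rw [map_smul, smul_eq_mul]
    congr 1
    have := h1 (u i) (v 0)
    simp only [hu, sub_add_cancel] at this
    rw [hu]
    linarith
  rw [hvol, hT, key]
  simp only [smul_eq_mul, hfφ]
  rw [integral_const_mul, corner_integral n 1 zero_le_one, Nat.factorial_succ, Nat.factorial_succ]
  simp only [Fin.sum_univ_succ, sub_sq, Finset.sum_sub_distrib, Finset.sum_add_distrib,
    ← Finset.sum_mul, ← Finset.mul_sum, Finset.sum_const, Finset.card_univ, Fintype.card_fin,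
    nsmul_eq_mul, one_pow]
  have : (n.factorial : ℝ) ≠ 0 := by positivity
  have h3 : (n : ℝ) + 1 ≠ 0 := by positivity
  have h4 : (n : ℝ) + 2 ≠ 0 := by positivity
  have h5 : (n : ℝ) + 1 + 1 = n + 2 := by ring
  push_cast
  rw [h5]
  field_simp
  ring
end

section
/- The vertex quadrature norm on a simplex is equivalent to the L² norm on affine functions, with explicit constants: for every affine map f : ℝⁿ → ℝ, ∫_T f(x)² dx ≤ (|T| / (n+1)) · Σᵢ₌₀ⁿ f(vᵢ)² ≤ (n+2) · ∫_T f(x)² dx. -/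
open MeasureTheory

section helpers
variable {n : ℕ} (b : AffineBasis (Fin (n + 1)) ℝ (Fin n → ℝ))

lemma vq_coord_shift (i j k : Fin (n+1)) (x : Fin n → ℝ) (c : ℝ) :
    b.coord k (x + c • (b i - b j)) =
      b.coord k x + c * ((if k = i then 1 else 0) - (if k = j then 1 else 0)) := by
  have h1 : b.coord k (x + c • (b i - b j)) = (b.coord k).linear (c • (b i - b j)) + b.coord k x := by
    have := (b.coord k).map_vadd x (c • (b i - b j))
    simpa [vadd_eq_add, add_comm] using this
  have h2 : (b.coord k).linear (b i - b j) = b.coord k (b i) - b.coord k (b j) := by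
    simpa using (b.coord k).linearMap_vsub (b i) (b j)
  rw [h1, map_smul, h2, b.coord_apply, b.coord_apply, smul_eq_mul]; ring

lemma vq_cont (k : Fin (n+1)) : Continuous (b.coord k) := continuous_barycentric_coord b k

lemma vq_image {i j : Fin (n+1)} (hij : i ≠ j) :
    (fun x => x + (b.coord j x / 2) • (b i - b j)) '' convexHull ℝ (Set.range b)
      = convexHull ℝ (Set.range b) ∩ {x | b.coord j x ≤ b.coord i x} := by
  rw [b.convexHull_eq_nonneg_coord]
  ext y
  constructor
  · rintro ⟨x, hx, rfl⟩
    have hx : ∀ k, 0 ≤ b.coord k x := hx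
    refine ⟨fun k => ?_, ?_⟩
    · simp only [vq_coord_shift]
      have h1 := hx k
      have h2 := hx j
      split_ifs with h h'
      · linarith
      · linarith
      · subst_vars; linarith
      · linarith
    · simp only [Set.mem_setOf_eq, vq_coord_shift, if_true, if_neg hij, if_neg hij.symm]
      have := hx i
      linarith
  · rintro ⟨hy, hy2⟩
    have hy : ∀ k, 0 ≤ b.coord k y := hy
    have hy2 : b.coord j y ≤ b.coord i y := hy2
    refine ⟨y + (- b.coord j y) • (b i - b j), fun k => ?_, ?_⟩
    · simp only [vq_coord_shift]
      have h1 := hy k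
      have h2 := hy j
      split_ifs with h h'
      · linarith
      · subst_vars; linarith
      · linarith
      · linarith
    · simp only [vq_coord_shift, if_true, if_neg hij.symm]
      module

lemma vq_change {i j : Fin (n+1)} (hij : i ≠ j) (g : (Fin n → ℝ) → ℝ) :
    ∫ x in convexHull ℝ (Set.range b) ∩ {x | b.coord j x ≤ b.coord i x}, g x
      = (1/2) * ∫ x in convexHull ℝ (Set.range b), g (x + (b.coord j x / 2) • (b i - b j)) := by
  have hms : MeasurableSet (convexHull ℝ (Set.range b)) :=
    ((Set.finite_range b).isCompact_convexHull (𝕜 := ℝ)).measurableSet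
  let L : (Fin n → ℝ) →ₗ[ℝ] (Fin n → ℝ) :=
    LinearMap.transvection (b.coord j).linear ((1/2 : ℝ) • (b i - b j))
  have hdet : L.det = 1/2 := by
    have h2 : (b.coord j).linear (b i - b j) = b.coord j (b i) - b.coord j (b j) := by
      simpa using (b.coord j).linearMap_vsub (b i) (b j)
    rw [LinearMap.transvection.det, map_smul, h2, b.coord_apply, b.coord_apply]
    simp [hij.symm]; norm_num
  have hL : ∀ x, x + (b.coord j x / 2) • (b i - b j) =
      LinearMap.toContinuousLinearMap L x + (b.coord j 0 / 2) • (b i - b j) := by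
    intro x
    have h1 : b.coord j x = (b.coord j).linear x + b.coord j 0 := by
      simpa using congrFun (b.coord j).decomp x
    simp only [LinearMap.coe_toContinuousLinearMap', L, LinearMap.transvection.apply]
    rw [h1]; module
  rw [← vq_image b hij, integral_image_eq_integral_abs_det_fderiv_smul volume hms
    (f' := fun _ => LinearMap.toContinuousLinearMap L)]
  · have : (LinearMap.toContinuousLinearMap L).det = 1/2 := hdet
    simp only [this, smul_eq_mul]
    rw [integral_const_mul]; norm_num
  · intro x _
    have : HasFDerivAt (fun x => LinearMap.toContinuousLinearMap L x
      + (b.coord j 0 / 2) • (b i - b j)) (LinearMap.toContinuousLinearMap L) x :=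
      (LinearMap.toContinuousLinearMap L).hasFDerivAt.add_const _
    simp only [hL]
    exact this.hasFDerivWithinAt
  · intro x _ y _ hxy
    have hxy : x + (b.coord j x / 2) • (b i - b j) = y + (b.coord j y / 2) • (b i - b j) := hxy
    have h := congrArg (b.coord j) hxy
    simp only [vq_coord_shift, if_true, if_neg hij.symm] at h
    have h : b.coord j x = b.coord j y := by linarith
    rw [h] at hxy
    exact add_right_cancel hxy

lemma vq_null {i j : Fin (n+1)} (hij : i ≠ j) :
    volume {x : Fin n → ℝ | b.coord i x = b.coord j x} = 0 := by
  let S : AffineSubspace ℝ (Fin n → ℝ) :=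
    (AffineSubspace.mk' (0:ℝ) ⊥).comap (b.coord i - b.coord j)
  have hS : (S : Set (Fin n → ℝ)) = {x | b.coord i x = b.coord j x} := by
    ext x
    simp [S, AffineSubspace.mem_mk', sub_eq_zero]
  rw [← hS]
  apply Measure.addHaar_affineSubspace
  intro h
  have : b i ∈ (S : Set (Fin n → ℝ)) := by rw [h]; trivial
  rw [hS] at this
  simp [b.coord_apply, hij.symm] at this

lemma vq_split {i j : Fin (n+1)} (hij : i ≠ j) (g : (Fin n → ℝ) → ℝ) (hg : Continuous g) :
    ∫ x in convexHull ℝ (Set.range b), g x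
      = (1/2) * (∫ x in convexHull ℝ (Set.range b), g (x + (b.coord j x / 2) • (b i - b j)))
      + (1/2) * ∫ x in convexHull ℝ (Set.range b), g (x + (b.coord i x / 2) • (b j - b i)) := by
  have hc := (Set.finite_range b).isCompact_convexHull (𝕜 := ℝ)
  rw [← vq_change b hij, ← vq_change b hij.symm]
  have hI : IntegrableOn g (convexHull ℝ (Set.range b)) := hg.continuousOn.integrableOn_compact hc
  have hu : convexHull ℝ (Set.range b) =
      (convexHull ℝ (Set.range b) ∩ {x | b.coord j x ≤ b.coord i x}) ∪
      (convexHull ℝ (Set.range b) ∩ {x | b.coord i x ≤ b.coord j x}) := by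
    rw [← Set.inter_union_distrib_left]
    refine (Set.inter_eq_left.2 fun x _ => ?_).symm
    exact le_total (b.coord j x) (b.coord i x)
  conv_lhs => rw [hu]
  refine integral_union_ae ?_ ?_ (hI.mono_set Set.inter_subset_left)
    (hI.mono_set Set.inter_subset_left)
  · refine measure_mono_null ?_ (vq_null b hij)
    rintro x ⟨⟨_, h1⟩, ⟨_, h2⟩⟩
    exact le_antisymm h2 h1
  · exact (hc.measurableSet.inter
      (measurableSet_le (vq_cont b i).measurable (vq_cont b j).measurable)).nullMeasurableSet

lemma vq_int (g : (Fin n → ℝ) → ℝ) (hg : Continuous g) :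
    IntegrableOn g (convexHull ℝ (Set.range b)) :=
  hg.continuousOn.integrableOn_compact ((Set.finite_range b).isCompact_convexHull (𝕜 := ℝ))

lemma vq_rec {i j : Fin (n+1)} (hij : i ≠ j) :
    3 * (∫ x in convexHull ℝ (Set.range b), b.coord i x * b.coord i x)
      = (∫ x in convexHull ℝ (Set.range b), b.coord j x * b.coord j x)
        + 4 * ∫ x in convexHull ℝ (Set.range b), b.coord i x * b.coord j x := by
  have ci := vq_cont b i
  have cj := vq_cont b j
  have h := vq_split b hij (fun x => b.coord i x * b.coord i x) (ci.mul ci)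
  simp only [vq_coord_shift, if_true, if_neg hij, if_neg hij.symm] at h
  have e1 : ∀ x, (b.coord i x + b.coord j x / 2 * (1 - 0)) * (b.coord i x + b.coord j x / 2 * (1 - 0))
    = (b.coord i x * b.coord i x + b.coord i x * b.coord j x)
      + (1/4) * (b.coord j x * b.coord j x) := fun x => by ring
  have e2 : ∀ x, (b.coord i x + b.coord i x / 2 * (0 - 1)) * (b.coord i x + b.coord i x / 2 * (0 - 1))
    = (1/4) * (b.coord i x * b.coord i x) := fun x => by ring
  simp only [e1, e2] at h
  rw [integral_add (vq_int b _ (by fun_prop)) (vq_int b _ (by fun_prop)),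
    integral_add (vq_int b _ (by fun_prop)) (vq_int b _ (by fun_prop)),
    integral_const_mul, integral_const_mul] at h
  linarith

lemma vq_main (f : (Fin n → ℝ) →ᵃ[ℝ] ℝ) :
    ((n:ℝ)+1) * (n+2) * ∫ x in convexHull ℝ (Set.range b), (f x)^2
      = (volume (convexHull ℝ (Set.range b))).toReal
        * (∑ i, (f (b i))^2 + (∑ i, f (b i))^2) := by
  set Q : Fin (n+1) → Fin (n+1) → ℝ := fun i j =>
    ∫ x in convexHull ℝ (Set.range b), b.coord i x * b.coord j x with hQ
  have cc := vq_cont b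
  have hsymm : ∀ i j, Q i j = Q j i := fun i j => by simp only [hQ, mul_comm]
  have h2 : ∀ i j, i ≠ j → Q i i = 2 * Q i j := by
    intro i j hij
    have h1 := vq_rec b hij
    have h2 := vq_rec b hij.symm
    have h3 := hsymm i j
    simp only [hQ] at h3 ⊢
    linarith
  have hd : ∀ i j, Q i i = Q j j := by
    intro i j
    by_cases h : i = j
    · rw [h]
    · rw [h2 i j h, h2 j i (Ne.symm h), hsymm]
  have hq : ∀ i j, Q i j = (Q 0 0 / 2) * (1 + if i = j then 1 else 0) := by
    intro i j
    split_ifs with h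
    · subst h; rw [hd i 0]; ring
    · have := h2 i j h; have := hd i 0; linarith
  have hexp : ∀ c : Fin (n+1) → ℝ,
      ∫ x in convexHull ℝ (Set.range b), (∑ i, c i * b.coord i x)^2
        = (Q 0 0 / 2) * ((∑ i, c i)^2 + ∑ i, (c i)^2) := by
    intro c
    have e : ∀ x, (∑ i, c i * b.coord i x)^2
        = ∑ i, ∑ j, (c i * c j) * (b.coord i x * b.coord j x) := by
      intro x
      rw [sq, Finset.sum_mul_sum]
      exact Finset.sum_congr rfl fun i _ => Finset.sum_congr rfl fun j _ => by ring
    simp only [e]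
    rw [integral_finset_sum _ fun i _ => vq_int b _ (by fun_prop)]
    have e2 : ∀ i, ∫ x in convexHull ℝ (Set.range b),
        ∑ j, (c i * c j) * (b.coord i x * b.coord j x) = ∑ j, (c i * c j) * Q i j := by
      intro i
      rw [integral_finset_sum _ fun j _ => vq_int b _ (by fun_prop)]
      simp only [integral_const_mul, hQ]
    simp only [e2]
    have e3 : ∀ i j, c i * c j * Q i j
        = (Q 0 0 / 2) * (c i * c j) + if i = j then (Q 0 0 / 2) * (c i * c j) else 0 := by
      intro i j; rw [hq i j]; split_ifs <;> ring
    simp only [e3, Finset.sum_add_distrib, Finset.sum_ite_eq, Finset.mem_univ, if_true]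
    simp only [← Finset.mul_sum, ← Finset.sum_mul, sq]
    ring
  have hvol := hexp (fun _ => 1)
  simp only [one_mul, b.sum_coord_apply_eq_one] at hvol
  simp at hvol
  have hf : ∀ x, f x = ∑ i, f (b i) * b.coord i x := by
    intro x
    have h := b.affineCombination_coord_eq_self x
    conv_lhs => rw [← h]
    rw [Finset.map_affineCombination _ _ _ (b.sum_coord_apply_eq_one x),
      Finset.affineCombination_eq_linear_combination _ _ _ (b.sum_coord_apply_eq_one x)]
    simp [mul_comm]
  have hff := hexp (fun i => f (b i))
  simp only [← hf] at hff
  rw [hff]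
  change (volume (convexHull ℝ (Set.range b))).toReal = _ at hvol
  rw [hvol]
  ring

end helpers

theorem vertex_quadrature_norm_equiv (n : ℕ) (hn : 1 ≤ n)
    (v : Fin (n + 1) → (Fin n → ℝ)) (hv : AffineIndependent ℝ v)
    (f : (Fin n → ℝ) →ᵃ[ℝ] ℝ) :
    (∫ x in convexHull ℝ (Set.range v), (f x) ^ 2)
        ≤ ((volume (convexHull ℝ (Set.range v))).toReal / ((n : ℝ) + 1))
            * ∑ i, (f (v i)) ^ 2 ∧
    ((volume (convexHull ℝ (Set.range v))).toReal / ((n : ℝ) + 1)) * ∑ i, (f (v i)) ^ 2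
        ≤ ((n : ℝ) + 2) * ∫ x in convexHull ℝ (Set.range v), (f x) ^ 2 := by
  let b : AffineBasis (Fin (n+1)) ℝ (Fin n → ℝ) :=
    ⟨v, hv, hv.affineSpan_eq_top_iff_card_eq_finrank_add_one.2 (by simp)⟩
  have hm : ((n:ℝ)+1) * (n+2) * ∫ x in convexHull ℝ (Set.range v), (f x)^2
      = (volume (convexHull ℝ (Set.range v))).toReal
        * (∑ i, (f (v i))^2 + (∑ i, f (v i))^2) := vq_main b f
  have hcs : (∑ i, f (v i))^2 ≤ ((n:ℝ)+1) * ∑ i, (f (v i))^2 := by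
    simpa using sq_sum_le_card_mul_sum_sq (s := Finset.univ) (f := fun i => f (v i))
  have hV : 0 ≤ (volume (convexHull ℝ (Set.range v))).toReal := ENNReal.toReal_nonneg
  generalize (volume (convexHull ℝ (Set.range v))).toReal = V at *
  generalize (∫ x in convexHull ℝ (Set.range v), (f x)^2) = I at *
  generalize (∑ i, (f (v i))^2) = A at *
  generalize (∑ i, f (v i)) = B at *
  have hn0 : (0:ℝ) < n + 1 := by positivity
  have hn2 : (0:ℝ) < n + 2 := by positivity
  constructor
  · rw [div_mul_eq_mul_div, le_div_iff₀ hn0]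
    have := mul_le_mul_of_nonneg_left hcs hV
    refine le_of_mul_le_mul_left ?_ hn2
    nlinarith
  · rw [div_mul_eq_mul_div, div_le_iff₀ hn0]
    have := mul_nonneg hV (sq_nonneg B)
    nlinarith
end

section
/- Invariance of the pressure and of the curl of the vorticity under a change of mass bilinear form: suppose (r̂, q̂, p̂) solves the saddle-point system with bilinear form a and data (f_r, f_q), and (rₕ, qₕ, pₕ) solves the saddle-point system with bilinear form aₕ and the same data (f_r, f_q). Then C r̂ = C rₕ and p̂ = pₕ. -/
noncomputable section

open scoped RealInnerProductSpace

variable {R Q P : Type*}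
  [NormedAddCommGroup R] [InnerProductSpace ℝ R] [FiniteDimensional ℝ R]
  [NormedAddCommGroup Q] [InnerProductSpace ℝ Q] [FiniteDimensional ℝ Q]
  [NormedAddCommGroup P] [InnerProductSpace ℝ P] [FiniteDimensional ℝ P]

/-- `(r, q, p)` solves the saddle-point system with bilinear form `a` and data `(fr, fq)`:
(i) `a(r, r̃) − ⟨q, C r̃⟩ = fr(r̃)` for all `r̃`;
(ii) `⟨C r, q̃⟩ − ⟨p, D q̃⟩ = fq(q̃)` for all `q̃`;
(iii) `⟨D q, p̃⟩ = 0` for all `p̃`. -/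
def Solves (C : R →ₗ[ℝ] Q) (D : Q →ₗ[ℝ] P) (a : R →ₗ[ℝ] R →ₗ[ℝ] ℝ)
    (fr : R →ₗ[ℝ] ℝ) (fq : Q →ₗ[ℝ] ℝ) (r : R) (q : Q) (p : P) : Prop :=
  (∀ r' : R, a r r' - ⟪q, C r'⟫ = fr r') ∧
  (∀ q' : Q, ⟪C r, q'⟫ - ⟪p, D q'⟫ = fq q') ∧
  (∀ p' : P, ⟪D q, p'⟫ = 0)

/-- Invariance of the pressure and of the curl of the vorticity under a change of mass
bilinear form: if `(rhat, qhat, phat)` solves the saddle-point system with form `a` and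
`(rₕ, qₕ, pₕ)` solves it with form `aₕ` and the same data `(fr, fq)`, then
`C rhat = C rₕ` and `phat = pₕ`. -/
theorem pressure_and_curl_invariant
    (C : R →ₗ[ℝ] Q) (D : Q →ₗ[ℝ] P)
    (hDC : ∀ r : R, D (C r) = 0) (hD : Function.Surjective D)
    (a ah : R →ₗ[ℝ] R →ₗ[ℝ] ℝ) (fr : R →ₗ[ℝ] ℝ) (fq : Q →ₗ[ℝ] ℝ)
    (rhat : R) (qhat : Q) (phat : P) (rh : R) (qh : Q) (ph : P)
    (hhat : Solves C D a fr fq rhat qhat phat) (hh : Solves C D ah fr fq rh qh ph) :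
    C rhat = C rh ∧ phat = ph := by
  obtain ⟨-, h1, -⟩ := hhat
  obtain ⟨-, h2, -⟩ := hh
  have hC : C rhat = C rh := by
    have e1 := h1 (C rhat - C rh)
    have e2 := h2 (C rhat - C rh)
    rw [map_sub, hDC, hDC, sub_zero, inner_zero_right, sub_zero] at e1 e2
    have h : ⟪C rhat - C rh, C rhat - C rh⟫ = 0 := by
      rw [inner_sub_left, e1, e2, sub_self]
    exact sub_eq_zero.mp (inner_self_eq_zero.mp h)
  refine ⟨hC, ?_⟩
  obtain ⟨q', hq⟩ := hD (phat - ph)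
  have e1 := h1 q'
  have e2 := h2 q'
  rw [hq] at e1 e2
  rw [hC] at e1
  have h : ⟪phat - ph, phat - ph⟫ = 0 := by
    rw [inner_sub_left]
    linarith
  exact sub_eq_zero.mp (inner_self_eq_zero.mp h)
end
end

section
/- Invariance of the vorticity when the two bilinear forms agree on the kernel of C: in addition to the setting of the saddle-point system, assume a is symmetric and positive definite (a(s,s) > 0 for all s ≠ 0) and that aₕ(s, t) = a(s, t) for all s ∈ R and all t ∈ ker C. If (r̂, q̂, p̂) solves the system with form a and data (f_r, f_q), and (rₕ, qₕ, pₕ) solves the system with form aₕ and the same data, then r̂ = rₕ. -/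
noncomputable section

open scoped RealInnerProductSpace

variable {R Q P : Type*}
  [NormedAddCommGroup R] [InnerProductSpace ℝ R] [FiniteDimensional ℝ R]
  [NormedAddCommGroup Q] [InnerProductSpace ℝ Q] [FiniteDimensional ℝ Q]
  [NormedAddCommGroup P] [InnerProductSpace ℝ P] [FiniteDimensional ℝ P]

/-- Invariance of the vorticity when the two bilinear forms agree on the kernel of `C`:
assume `a` is symmetric and positive definite and `aₕ(s, t) = a(s, t)` for all `s` and all
`t ∈ ker C`.  If `(rhat, qhat, phat)` solves the system with form `a` and
`(rh, qh, ph)` solves it with form `aₕ` and the same data, then `rhat = rh`. -/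
theorem vorticity_invariant
    (C : R →ₗ[ℝ] Q) (D : Q →ₗ[ℝ] P)
    (hDC : ∀ r : R, D (C r) = 0) (hD : Function.Surjective D)
    (a ah : R →ₗ[ℝ] R →ₗ[ℝ] ℝ) (fr : R →ₗ[ℝ] ℝ) (fq : Q →ₗ[ℝ] ℝ)
    (ha_symm : ∀ s t : R, a s t = a t s)
    (ha_pos : ∀ s : R, s ≠ 0 → 0 < a s s)
    (hker : ∀ s t : R, C t = 0 → ah s t = a s t)
    (rhat : R) (qhat : Q) (phat : P) (rh : R) (qh : Q) (ph : P)
    (hhat : Solves C D a fr fq rhat qhat phat) (hh : Solves C D ah fr fq rh qh ph) :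
    rhat = rh := by
  obtain ⟨h1, h2, -⟩ := hhat
  obtain ⟨g1, g2, -⟩ := hh
  have hC : C (rhat - rh) = 0 := by
    have e1 := h2 (C (rhat - rh))
    have e2 := g2 (C (rhat - rh))
    rw [hDC, inner_zero_right] at e1 e2
    rw [← inner_self_eq_zero (𝕜 := ℝ)]
    have e3 : ⟪C (rhat - rh), C (rhat - rh)⟫ =
        ⟪C rhat, C (rhat - rh)⟫ - ⟪C rh, C (rhat - rh)⟫ := by
      rw [← inner_sub_left, ← map_sub]
    linarith
  by_contra hne
  have hpos := ha_pos (rhat - rh) (sub_ne_zero.mpr hne)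
  have e1 := h1 (rhat - rh)
  have e2 := g1 (rhat - rh)
  rw [hC, inner_zero_right] at e1 e2
  rw [hker _ _ hC] at e2
  have e3 : a (rhat - rh) (rhat - rh) = a rhat (rhat - rh) - a rh (rhat - rh) := by
    rw [map_sub a, LinearMap.sub_apply]
  linarith
end
end

section
/- Unique solvability of the saddle-point system: in addition to the setting of the saddle-point system, assume the complex property ker D ⊆ ran C and that the bilinear form a is positive definite (a(s,s) > 0 for all s ≠ 0). Then for every choice of linear functionals f_r : R → ℝ and f_q : Q → ℝ there exists exactly one triple (r, q, p) ∈ R×Q×P solving the saddle-point system with form a and data (f_r, f_q). -/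
noncomputable section

open scoped RealInnerProductSpace

variable {R Q P : Type*}
  [NormedAddCommGroup R] [InnerProductSpace ℝ R] [FiniteDimensional ℝ R]
  [NormedAddCommGroup Q] [InnerProductSpace ℝ Q] [FiniteDimensional ℝ Q]
  [NormedAddCommGroup P] [InnerProductSpace ℝ P] [FiniteDimensional ℝ P]

/-- Unique solvability of the saddle-point system: assume additionally the complex property
`ker D ⊆ ran C` and that `a` is positive definite.  Then for every choice of linear
functionals `fr : R → ℝ` and `fq : Q → ℝ` there exists exactly one triple
`(r, q, p)` solving the saddle-point system with form `a` and data `(fr, fq)`. -/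
theorem saddle_point_unique_solvability
    (C : R →ₗ[ℝ] Q) (D : Q →ₗ[ℝ] P)
    (hDC : ∀ r : R, D (C r) = 0) (hD : Function.Surjective D)
    (hexact : LinearMap.ker D ≤ LinearMap.range C)
    (a : R →ₗ[ℝ] R →ₗ[ℝ] ℝ) (ha_pos : ∀ s : R, s ≠ 0 → 0 < a s s) :
    ∀ (fr : R →ₗ[ℝ] ℝ) (fq : Q →ₗ[ℝ] ℝ),
      ∃! x : R × Q × P, Solves C D a fr fq x.1 x.2.1 x.2.2 := by
  intro fr fq
  let T : (R × Q × P) →ₗ[ℝ] (Module.Dual ℝ R × Module.Dual ℝ Q × Module.Dual ℝ P) :=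
    { toFun := fun x => (a x.1 - (innerₗ Q x.2.1).comp C,
        innerₗ Q (C x.1) - (innerₗ P x.2.2).comp D, innerₗ P (D x.2.1))
      map_add' := by
        intro x y
        refine Prod.ext ?_ (Prod.ext ?_ ?_) <;> ext z <;>
          simp <;> ring
      map_smul' := by
        intro c x
        refine Prod.ext ?_ (Prod.ext ?_ ?_) <;> ext z <;>
          simp <;> ring }
  have key : ∀ x, Solves C D a fr fq x.1 x.2.1 x.2.2 ↔ T x = (fr, fq, 0) := by
    intro x
    simp [Solves, T, Prod.ext_iff, LinearMap.ext_iff]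
  have hinj : Function.Injective T := by
    rw [← LinearMap.ker_eq_bot, LinearMap.ker_eq_bot']
    rintro ⟨r, q, p⟩ h
    have h' : (∀ r' : R, a r r' - ⟪q, C r'⟫ = 0) ∧ (∀ q' : Q, ⟪C r, q'⟫ - ⟪p, D q'⟫ = 0) ∧
        (∀ p' : P, ⟪D q, p'⟫ = 0) := by
      simp only [Prod.ext_iff, LinearMap.ext_iff] at h
      exact h
    obtain ⟨h1, h2, h3⟩ := h'
    have hDq : D q = 0 := inner_self_eq_zero.mp (h3 (D q))
    have hr : r = 0 := by
      by_contra hne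
      have e1 := h1 r
      have e2 := h2 q
      rw [hDq, inner_zero_right, real_inner_comm] at e2
      have := ha_pos r hne
      linarith
    subst hr
    have hp : p = 0 := by
      obtain ⟨q', hq'⟩ := hD p
      have e := h2 q'
      rw [hq', map_zero, inner_zero_left, zero_sub, neg_eq_zero] at e
      exact inner_self_eq_zero.mp e
    have hq : q = 0 := by
      obtain ⟨s, hs⟩ := hexact (LinearMap.mem_ker.mpr hDq)
      have e := h1 s
      rw [hs, map_zero, LinearMap.zero_apply, zero_sub, neg_eq_zero] at e
      exact inner_self_eq_zero.mp e
    simp [hp, hq]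
  have hdim : Module.finrank ℝ (R × Q × P) =
      Module.finrank ℝ (Module.Dual ℝ R × Module.Dual ℝ Q × Module.Dual ℝ P) := by
    simp [Module.finrank_prod, Subspace.dual_finrank_eq]
  have hsurj : Function.Surjective T :=
    (LinearMap.injective_iff_surjective_of_finrank_eq_finrank hdim).mp hinj
  obtain ⟨x, hx⟩ := hsurj (fr, fq, 0)
  exact ⟨x, (key x).mpr hx, fun y hy => hinj (((key y).mp hy).trans hx.symm)⟩
end
end
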